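/- For every integer n ≥ 1, the Lorentz cone L_n ⊆ R^{n+1} is resilient, i.e., every linear map P : R^{n+1} → R^{n+1} satisfying P^{⊗k}(L_n^{⊗max k}) ⊆ L_n^{⊗min k} for all k ≥ 1 can be written as P(v) = Σ_{i=1}^m φ_i(v) x_i with x_i ∈ L_n and φ_i in the dual cone of L_n. -/

import Mathlib

open scoped TensorProduct
open Set

noncomputable section

/-- The dual cone of a set `C`, inside the algebraic dual space. -/
def dualConeSet {V : Type*} [AddCommGroup V] [Module ℝ V] (C : Set V) :
    Set (Module.Dual ℝ V) := {φ | ∀ x ∈ C, 0 ≤ φ x}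

/-- A proper cone: a closed convex cone which is generating (`C - C = V`) and
pointed (`C ∩ (-C) = {0}`). -/
def IsProperCone {V : Type*} [NormedAddCommGroup V] [NormedSpace ℝ V] (C : Set V) : Prop :=
  IsClosed C ∧ Convex ℝ C ∧ (∀ ⦃c : ℝ⦄, 0 < c → ∀ ⦃x⦄, x ∈ C → c • x ∈ C) ∧
    (∀ v : V, ∃ x ∈ C, ∃ y ∈ C, v = x - y) ∧ C ∩ (-C) = {0}

/-- `(C₁,C₂)`-entanglement breaking maps. -/
def IsEntanglementBreaking {V₁ V₂ : Type*} [AddCommGroup V₁] [Module ℝ V₁]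
    [AddCommGroup V₂] [Module ℝ V₂] (C₁ : Set V₁) (C₂ : Set V₂) (P : V₁ →ₗ[ℝ] V₂) : Prop :=
  ∃ (m : ℕ) (φ : Fin m → Module.Dual ℝ V₁) (x : Fin m → V₂),
    (∀ i, φ i ∈ dualConeSet C₁) ∧ (∀ i, x i ∈ C₂) ∧ ∀ v, P v = ∑ i, φ i v • x i

/-- The `k`-fold minimal tensor power of a cone. -/
def minTensorPow {V : Type*} [AddCommGroup V] [Module ℝ V] (C : Set V) (k : ℕ) :
    Set (⨂[ℝ] _ : Fin k, V) :=
  convexHull ℝ {z | ∃ x : Fin k → V, (∀ i, x i ∈ C) ∧ z = PiTensorProduct.tprod ℝ x}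

/-- The functional on the `k`-fold tensor power induced by a family of functionals,
`x₁ ⊗ ⋯ ⊗ x_k ↦ ∏ i, φ i (x i)`. -/
def dualPairing {V : Type*} [AddCommGroup V] [Module ℝ V] {k : ℕ}
    (φ : Fin k → Module.Dual ℝ V) : (⨂[ℝ] _ : Fin k, V) →ₗ[ℝ] ℝ :=
  PiTensorProduct.lift ((MultilinearMap.mkPiAlgebra ℝ (Fin k) ℝ).compLinearMap φ)

/-- The `k`-fold maximal tensor power of a cone: the dual of the minimal tensor power of
the dual cone, under the canonical identification of `(V^{⊗k})*` with `(V*)^{⊗k}`. -/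
def maxTensorPow {V : Type*} [AddCommGroup V] [Module ℝ V] (C : Set V) (k : ℕ) :
    Set (⨂[ℝ] _ : Fin k, V) :=
  {z | ∀ φ : Fin k → Module.Dual ℝ V, (∀ i, φ i ∈ dualConeSet C) → 0 ≤ dualPairing φ z}

/-- `(C₁,C₂)`-entanglement annihilating maps: `P^{⊗k}` maps the `k`-fold maximal tensor power
of `C₁` into the `k`-fold minimal tensor power of `C₂`, for every `k ≥ 1`. -/
def IsEntanglementAnnihilating {V₁ V₂ : Type*} [AddCommGroup V₁] [Module ℝ V₁]
    [AddCommGroup V₂] [Module ℝ V₂] (C₁ : Set V₁) (C₂ : Set V₂) (P : V₁ →ₗ[ℝ] V₂) : Prop :=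
  ∀ k : ℕ, 1 ≤ k →
    Set.MapsTo (⇑(PiTensorProduct.map fun _ : Fin k => P))
      (maxTensorPow C₁ k) (minTensorPow C₂ k)

/-- A pair of cones is resilient if every entanglement annihilating map between them is
entanglement breaking. -/
def IsResilientPair {V₁ V₂ : Type*} [AddCommGroup V₁] [Module ℝ V₁]
    [AddCommGroup V₂] [Module ℝ V₂] (C₁ : Set V₁) (C₂ : Set V₂) : Prop :=
  ∀ P : V₁ →ₗ[ℝ] V₂, IsEntanglementAnnihilating C₁ C₂ P → IsEntanglementBreaking C₁ C₂ P

/-- The minimal tensor product of two cones. -/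
def minTensor {V W : Type*} [AddCommGroup V] [Module ℝ V] [AddCommGroup W] [Module ℝ W]
    (C : Set V) (D : Set W) : Set (V ⊗[ℝ] W) :=
  convexHull ℝ {z | ∃ x ∈ C, ∃ y ∈ D, z = x ⊗ₜ[ℝ] y}

/-- The maximal tensor product of two cones: the dual of the minimal tensor product of the
dual cones, under the canonical identification of `(V ⊗ W)*` with `V* ⊗ W*`. -/
def maxTensor {V W : Type*} [AddCommGroup V] [Module ℝ V] [AddCommGroup W] [Module ℝ W]
    (C : Set V) (D : Set W) : Set (V ⊗[ℝ] W) :=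
  {z | ∀ φ ∈ dualConeSet C, ∀ ψ ∈ dualConeSet D,
      0 ≤ TensorProduct.dualDistrib ℝ V W (φ ⊗ₜ[ℝ] ψ) z}

/-- The Lorentz cone `L_n ⊆ ℝ ⊕ ℝⁿ`. -/
def lorentzCone (n : ℕ) : Set (ℝ × EuclideanSpace ℝ (Fin n)) := {p | ‖p.2‖ ≤ p.1}


/-- The multilinear form with coefficient tensor `ε`. -/
def FF {k n : ℕ} (ε : (Fin k → Fin n) → ℝ) (u : Fin k → Fin n → ℝ) : ℝ :=
  ∑ I : Fin k → Fin n, ε I * ∏ i, u i (I i)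

lemma FF_hull {k n : ℕ} (ε : (Fin k → Fin n) → ℝ) (G : Finset (Fin n → ℝ)) (M : ℝ)
    (hM : ∀ w ∈ Fintype.piFinset (fun _ : Fin k => G), |FF ε w| ≤ M)
    (u : Fin k → Fin n → ℝ) (hu : ∀ i, u i ∈ convexHull ℝ (G : Set (Fin n → ℝ))) :
    |FF ε u| ≤ M := by
  simp only [Finset.mem_convexHull'] at hu
  choose c hc0 hc1 hcu using hu
  have h1 : FF ε u = ∑ w ∈ Fintype.piFinset (fun _ : Fin k => G), (∏ i, c i (w i)) * FF ε w := by
    unfold FF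
    simp only [Finset.mul_sum]
    rw [Finset.sum_comm]
    refine Finset.sum_congr rfl fun I _ => ?_
    have : ∀ i, u i (I i) = ∑ g ∈ G, c i g * g (I i) := by
      intro i
      rw [← hcu i]
      simp [Finset.sum_apply]
    simp only [this]
    rw [Finset.prod_univ_sum, Finset.mul_sum]
    refine Finset.sum_congr rfl fun w _ => ?_
    rw [Finset.prod_mul_distrib]; ring
  have h2 : ∑ w ∈ Fintype.piFinset (fun _ : Fin k => G), (∏ i, c i (w i)) = 1 := by
    rw [← Finset.prod_univ_sum]; simp [hc1]
  rw [h1]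
  refine (Finset.abs_sum_le_sum_abs _ _).trans ?_
  calc _ ≤ ∑ w ∈ Fintype.piFinset (fun _ : Fin k => G), (∏ i, c i (w i)) * M := by
        refine Finset.sum_le_sum fun w hw => ?_
        have hp : 0 ≤ ∏ i, c i (w i) :=
          Finset.prod_nonneg fun i _ => hc0 i _ (Fintype.mem_piFinset.1 hw i)
        rw [abs_mul, abs_of_nonneg hp]
        exact mul_le_mul_of_nonneg_left (hM w hw) hp
    _ = M := by rw [← Finset.sum_mul, h2, one_mul]

lemma FF_homog {k n : ℕ} (ε : (Fin k → Fin n) → ℝ) (M : ℝ)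
    (hM : ∀ u : Fin k → Fin n → ℝ, (∀ i, ∑ j, u i j ^ 2 ≤ 1) → |FF ε u| ≤ M)
    (c : Fin k → Fin n → ℝ) (a : Fin k → ℝ) (ha : ∀ i, 0 ≤ a i)
    (hc : ∀ i, ∑ j, c i j ^ 2 ≤ a i ^ 2) : |FF ε c| ≤ M * ∏ i, a i := by
  have h0 : ∀ i j, c i j = a i * (c i j / a i) := by
    intro i j
    by_cases h : a i = 0
    · have h1 := hc i
      rw [h] at h1 ⊢
      have h2 : c i j ^ 2 ≤ ∑ j, c i j ^ 2 :=
        Finset.single_le_sum (f := fun j => c i j ^ 2) (fun _ _ => sq_nonneg _) (Finset.mem_univ j)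
      have : c i j ^ 2 ≤ 0 := by nlinarith
      have : c i j = 0 := by nlinarith [sq_nonneg (c i j), pow_eq_zero_iff (two_ne_zero) |>.1 (le_antisymm this (sq_nonneg _))]
      simp [this]
    · field_simp
  have h1 : FF ε c = (∏ i, a i) * FF ε (fun i j => c i j / a i) := by
    unfold FF
    rw [Finset.mul_sum]
    refine Finset.sum_congr rfl fun I _ => ?_
    have : ∏ i, c i (I i) = (∏ i, a i) * ∏ i, (c i (I i) / a i) := by
      rw [← Finset.prod_mul_distrib]
      exact Finset.prod_congr rfl fun i _ => h0 i _
    rw [this]; ring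
  have hp : 0 ≤ ∏ i, a i := Finset.prod_nonneg fun i _ => ha i
  rw [h1, abs_mul, abs_of_nonneg hp, mul_comm M]
  refine mul_le_mul_of_nonneg_left (hM _ fun i => ?_) hp
  simp only [div_pow]
  rw [← Finset.sum_div]
  exact div_le_one_of_le₀ (hc i) (sq_nonneg _)

lemma exists_net (n k : ℕ) (hn : 1 ≤ n) (hk : 1 ≤ k) : ∃ G : Finset (Fin n → ℝ),
    G.card ≤ (6 * n * k + 3) ^ n ∧ (∀ g ∈ G, ∑ j, g j ^ 2 ≤ 1 + 1 / (k : ℝ)) ∧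
    ∀ u : Fin n → ℝ, ∑ j, u j ^ 2 ≤ 1 → u ∈ convexHull ℝ (G : Set (Fin n → ℝ)) := by
  classical
  set m : ℕ := 3 * n * k with hm
  have hmpos : 0 < m := by positivity
  have hm' : (0 : ℝ) < m := by exact_mod_cast hmpos
  let B : Finset ℝ := (Finset.Icc (-(m + 1 : ℤ)) (m + 1)).image fun z : ℤ => (z : ℝ) / m
  have hB : B.card ≤ 6 * n * k + 3 := by
    refine Finset.card_image_le.trans ?_
    rw [Int.card_Icc]
    have : 6 * n * k = 2 * m := by rw [hm]; ring
    omega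
  refine ⟨(Fintype.piFinset fun _ : Fin n => B).filter
    (fun g => ∑ j, g j ^ 2 ≤ 1 + 1 / (k : ℝ)), ?_, ?_, ?_⟩
  · refine (Finset.card_filter_le _ _).trans ?_
    rw [Fintype.card_piFinset]
    simp only [Finset.prod_const, Finset.card_univ, Fintype.card_fin]
    exact Nat.pow_le_pow_left hB n
  · intro g hg
    exact (Finset.mem_filter.1 hg).2
  · intro u hu
    have hle : ∀ j, |u j| ≤ 1 := by
      intro j
      have h2 : u j ^ 2 ≤ ∑ j, u j ^ 2 :=
        Finset.single_le_sum (f := fun j => u j ^ 2) (fun _ _ => sq_nonneg _) (Finset.mem_univ j)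
      rw [← sq_le_one_iff_abs_le_one]; linarith
    let t : Fin n → Set ℝ := fun j => {(⌊u j * m⌋ : ℝ) / m, ((⌊u j * m⌋ : ℝ) + 1) / m}
    have hut : u ∈ convexHull ℝ (Set.pi Set.univ t) := by
      rw [convexHull_pi]
      intro j _
      show u j ∈ convexHull ℝ {(⌊u j * m⌋ : ℝ) / m, ((⌊u j * m⌋ : ℝ) + 1) / m}
      rw [convexHull_pair, segment_eq_Icc (by gcongr; linarith)]
      constructor
      · rw [div_le_iff₀ hm']; exact Int.floor_le _
      · rw [le_div_iff₀ hm']; exact (Int.lt_floor_add_one _).le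
    refine convexHull_mono ?_ hut
    intro g hg
    have hd : ∀ j, |g j - u j| ≤ 1 / m := by
      intro j
      have h1 := Int.floor_le (u j * m)
      have h2 := (Int.lt_floor_add_one (u j * m)).le
      have e : u j = u j * m / m := by field_simp
      rcases hg j (Set.mem_univ _) with h | h
      · rw [h, e, ← sub_div, abs_div, abs_of_pos hm']
        gcongr
        rw [← e, abs_le]; constructor <;> linarith
      · rw [Set.mem_singleton_iff] at h
        rw [h, e, ← sub_div, abs_div, abs_of_pos hm']
        gcongr
        rw [← e, abs_le]; constructor <;> linarith
    have hfl : ∀ j, -(m : ℤ) ≤ ⌊u j * m⌋ ∧ ⌊u j * m⌋ ≤ m := by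
      intro j
      have := abs_le.1 (hle j)
      constructor
      · rw [Int.le_floor]; push_cast; nlinarith
      · rw [← Int.cast_le (R := ℝ)]; push_cast
        have h1 := Int.floor_le (u j * m)
        nlinarith
    rw [Finset.mem_coe, Finset.mem_filter, Fintype.mem_piFinset]
    constructor
    · intro j
      have := hfl j
      rcases hg j (Set.mem_univ _) with h | h
      · exact Finset.mem_image.2 ⟨⌊u j * m⌋, Finset.mem_Icc.2 ⟨by omega, by omega⟩, h.symm⟩
      · rw [Set.mem_singleton_iff] at h
        refine Finset.mem_image.2 ⟨⌊u j * m⌋ + 1, Finset.mem_Icc.2 ⟨by omega, by omega⟩, ?_⟩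
        rw [h]; push_cast; rfl
    · have hm1 : (1 : ℝ) ≤ m := by exact_mod_cast hmpos
      have hb : ∀ j, g j ^ 2 ≤ u j ^ 2 + 3 / m := by
        intro j
        have h1 := hd j
        have h2 := hle j
        have e : g j = u j + (g j - u j) := by ring
        have h3 : u j * (g j - u j) ≤ 1 * (1 / m) := by
          refine (le_abs_self _).trans ?_
          rw [abs_mul]
          gcongr
        have h4 : (g j - u j) ^ 2 ≤ 1 / m := by
          rw [← sq_abs]
          have : (1 : ℝ) / m ≤ 1 := by rw [div_le_one hm']; exact hm1
          nlinarith [abs_nonneg (g j - u j)]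
        have h5 : (3 : ℝ) / m = 3 * (1 / m) := by ring
        rw [h5]
        nlinarith
      calc ∑ j, g j ^ 2 ≤ ∑ j, (u j ^ 2 + 3 / m) := Finset.sum_le_sum fun j _ => hb j
        _ = ∑ j, u j ^ 2 + n * (3 / m) := by simp [Finset.sum_add_distrib]
        _ ≤ 1 + 1 / (k : ℝ) := by
          have : (n : ℝ) * (3 / m) = 1 / k := by
            rw [hm]; push_cast
            have : (n : ℝ) ≠ 0 := by positivity
            have : (k : ℝ) ≠ 0 := by positivity
            field_simp
          rw [this]; linarith

/-- the sign tensors -/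
def SS (k n : ℕ) : Finset ((Fin k → Fin n) → ℝ) :=
  Fintype.piFinset fun _ => ({1, -1} : Finset ℝ)

lemma SS_card (k n : ℕ) : ((SS k n).card : ℝ) = ∏ _I : Fin k → Fin n, (2 : ℝ) := by
  unfold SS
  have : ({1, -1} : Finset ℝ).card = 2 := Finset.card_pair (by norm_num)
  rw [Fintype.card_piFinset, this]
  push_cast; rfl

lemma SS_exp {k n : ℕ} (s : ℝ) (hs : s ^ 2 = 4) (w : Fin k → Fin n → ℝ) (hk : 1 ≤ k)
    (hw : ∀ i, ∑ j, w i j ^ 2 ≤ 1 + 1 / (k : ℝ)) :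
    ∑ ε ∈ SS k n, Real.exp (s * FF ε w) ≤ (SS k n).card * Real.exp 6 := by
  have h1 : ∑ ε ∈ SS k n, Real.exp (s * FF ε w) =
      ∏ I : Fin k → Fin n, ∑ x ∈ ({1, -1} : Finset ℝ), Real.exp (s * (x * ∏ i, w i (I i))) := by
    rw [Finset.prod_univ_sum]
    refine Finset.sum_congr rfl fun ε _ => ?_
    rw [FF, Finset.mul_sum, Real.exp_sum]
  have h2 : ∀ I : Fin k → Fin n, ∑ x ∈ ({1, -1} : Finset ℝ), Real.exp (s * (x * ∏ i, w i (I i)))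
      ≤ 2 * Real.exp (2 * ∏ i, w i (I i) ^ 2) := by
    intro I
    rw [Finset.sum_pair (by norm_num)]
    have := Real.cosh_le_exp_half_sq (s * ∏ i, w i (I i))
    rw [Real.cosh_eq, mul_pow, hs, ← Finset.prod_pow] at this
    have e : (4 * ∏ i, w i (I i) ^ 2) / 2 = 2 * ∏ i, w i (I i) ^ 2 := by ring
    rw [e] at this
    have e1 : s * (1 * ∏ i, w i (I i)) = s * ∏ i, w i (I i) := by ring
    have e2 : s * (-1 * ∏ i, w i (I i)) = -(s * ∏ i, w i (I i)) := by ring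
    rw [e1, e2]
    linarith
  rw [h1]
  refine (Finset.prod_le_prod (fun I _ => Finset.sum_nonneg fun _ _ => (Real.exp_pos _).le)
    (fun I _ => h2 I)).trans ?_
  rw [Finset.prod_mul_distrib, ← SS_card, ← Real.exp_sum, ← Finset.mul_sum]
  gcongr
  have h3 : ∑ I : Fin k → Fin n, ∏ i, w i (I i) ^ 2 = ∏ i, ∑ j, w i j ^ 2 := by
    rw [Finset.prod_univ_sum, Fintype.piFinset_univ]
  rw [h3]
  have h4 : ∏ i, ∑ j, w i j ^ 2 ≤ ∏ _i : Fin k, (1 + 1 / (k : ℝ)) :=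
    Finset.prod_le_prod (fun i _ => Finset.sum_nonneg fun _ _ => sq_nonneg _) (fun i _ => hw i)
  have h5 : ∏ _i : Fin k, (1 + 1 / (k : ℝ)) ≤ Real.exp 1 := by
    rw [Finset.prod_const, Finset.card_univ, Fintype.card_fin]
    have hk0 : (k : ℝ) ≠ 0 := by positivity
    calc (1 + 1 / (k : ℝ)) ^ k ≤ (Real.exp (1 / k)) ^ k := by
          gcongr
          linarith [Real.add_one_le_exp (1 / (k : ℝ))]
      _ = Real.exp 1 := by rw [← Real.exp_nat_mul]; congr 1; field_simp
  linarith [Real.exp_one_lt_d9]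

lemma SS_orth {k n : ℕ} (I J : Fin k → Fin n) :
    ∑ ε ∈ SS k n, ε J * ε I = if J = I then ((SS k n).card : ℝ) else 0 := by
  split_ifs with h
  · subst h
    have : ∀ ε ∈ SS k n, ε J * ε J = 1 := by
      intro ε hε
      have := Fintype.mem_piFinset.1 hε J
      simp only [Finset.mem_insert, Finset.mem_singleton] at this
      rcases this with h | h <;> rw [h] <;> norm_num
    rw [Finset.sum_congr rfl this]; simp
  · have e : ∀ ε ∈ SS k n, ε J * ε I =
        ∏ K, ((if K = J then ε K else 1) * (if K = I then ε K else 1)) := by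
      intro ε _
      rw [Finset.prod_mul_distrib]; simp
    rw [Finset.sum_congr rfl e]
    unfold SS
    rw [← Finset.prod_univ_sum (fun _ => ({1, -1} : Finset ℝ))
      (fun K x => ((if K = J then x else 1) * (if K = I then x else 1)))]
    refine Finset.prod_eq_zero (Finset.mem_univ J) ?_
    rw [Finset.sum_pair (by norm_num)]
    simp [h]

/-- the average of the squared injective norm is polynomially bounded -/
lemma exists_M (n k : ℕ) (hn : 1 ≤ n) (hk : 1 ≤ k) :
    ∃ M : ((Fin k → Fin n) → ℝ) → ℝ, (∀ ε, 0 ≤ M ε) ∧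
      (∀ ε u, (∀ i, ∑ j, u i j ^ 2 ≤ 1) → |FF ε u| ≤ M ε) ∧
      ∑ ε ∈ SS k n, M ε ^ 2 ≤
        (SS k n).card * ((1 + 2 * Real.exp 6) * ((6 * n * k + 3) * n * k) ^ 2) := by
  obtain ⟨G, hG, hGn, hGc⟩ := exists_net n k hn hk
  set A : ℝ := (6 * n * k + 3) * n * k with hA
  have hn' : (1 : ℝ) ≤ n := by exact_mod_cast hn
  have hk' : (1 : ℝ) ≤ k := by exact_mod_cast hk
  have hnk : (1 : ℝ) ≤ n * k := by nlinarith
  have hA1 : 1 ≤ A := by rw [hA]; nlinarith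
  let X : ((Fin k → Fin n) → ℝ) → ℝ := fun ε =>
    A ^ 2 * (1 + Real.exp (-(2 * A)) * ∑ w ∈ Fintype.piFinset (fun _ : Fin k => G),
      (Real.exp (2 * FF ε w) + Real.exp ((-2) * FF ε w)))
  have hX : ∀ ε, 0 ≤ X ε := fun ε => by
    have : 0 ≤ ∑ w ∈ Fintype.piFinset (fun _ : Fin k => G),
      (Real.exp (2 * FF ε w) + Real.exp ((-2) * FF ε w)) :=
        Finset.sum_nonneg fun _ _ => by positivity
    positivity
  refine ⟨fun ε => Real.sqrt (X ε), fun ε => Real.sqrt_nonneg _, ?_, ?_⟩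
  · intro ε u hu
    refine FF_hull ε G _ ?_ u fun i => hGc _ (hu i)
    intro w hw
    refine Real.le_sqrt_of_sq_le ?_
    have h1 : Real.exp (2 * |FF ε w|) ≤ ∑ w ∈ Fintype.piFinset (fun _ : Fin k => G),
      (Real.exp (2 * FF ε w) + Real.exp ((-2) * FF ε w)) := by
      refine le_trans ?_ (Finset.single_le_sum (f := fun w =>
        (Real.exp (2 * FF ε w) + Real.exp ((-2) * FF ε w))) (fun _ _ => by positivity) hw)
      rcases abs_cases (FF ε w) with ⟨h, _⟩ | ⟨h, _⟩ <;> rw [h]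
      · linarith [Real.exp_pos ((-2) * FF ε w)]
      · have : 2 * -FF ε w = (-2) * FF ε w := by ring
        rw [this]
        linarith [Real.exp_pos (2 * FF ε w)]
    set y := |FF ε w|
    have hy : 0 ≤ y := abs_nonneg _
    have h2 : y ^ 2 ≤ A ^ 2 * (1 + Real.exp (-(2 * A)) * Real.exp (2 * y)) := by
      rw [← Real.exp_add]
      have e : -(2 * A) + 2 * y = 2 * (y - A) := by ring
      rw [e]
      by_cases hyA : y ≤ A
      · have := Real.exp_pos (2 * (y - A))
        nlinarith [mul_pos (pow_pos (by linarith : 0 < A) 2) this]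
      · push Not at hyA
        have h3 : y ≤ A * Real.exp (y - A) := by
          have := Real.add_one_le_exp (y - A)
          nlinarith
        have h4 : Real.exp (2 * (y - A)) = Real.exp (y - A) ^ 2 := by
          rw [← Real.exp_nat_mul]; norm_num
        rw [h4]
        nlinarith [mul_self_le_mul_self hy h3, sq_nonneg A]
    refine h2.trans ?_
    show _ ≤ A ^ 2 * (1 + Real.exp (-(2 * A)) * _)
    gcongr
  · have e : ∀ ε ∈ SS k n, Real.sqrt (X ε) ^ 2 = X ε := fun ε _ => Real.sq_sqrt (hX ε)
    rw [Finset.sum_congr rfl e]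
    show ∑ ε ∈ SS k n, A ^ 2 * (1 + _) ≤ _
    rw [← Finset.mul_sum, Finset.sum_add_distrib, ← Finset.mul_sum, Finset.sum_comm]
    have h1 : ∑ w ∈ Fintype.piFinset (fun _ : Fin k => G), ∑ ε ∈ SS k n,
        (Real.exp (2 * FF ε w) + Real.exp ((-2) * FF ε w)) ≤
        Real.exp (2 * A) * ((SS k n).card * (2 * Real.exp 6)) := by
      calc _ ≤ ∑ w ∈ Fintype.piFinset (fun _ : Fin k => G),
            ((SS k n).card * (2 * Real.exp 6)) := by
            refine Finset.sum_le_sum fun w hw => ?_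
            have hw' : ∀ i, ∑ j, w i j ^ 2 ≤ 1 + 1 / (k : ℝ) :=
              fun i => hGn _ (Fintype.mem_piFinset.1 hw i)
            rw [Finset.sum_add_distrib]
            have a1 := SS_exp 2 (by norm_num) w hk hw'
            have a2 := SS_exp (-2) (by norm_num) w hk hw'
            linarith
        _ ≤ _ := by
            rw [Finset.sum_const, nsmul_eq_mul]
            gcongr
            rw [Fintype.card_piFinset]
            simp only [Finset.prod_const, Finset.card_univ, Fintype.card_fin]
            push_cast
            have hG' : (G.card : ℝ) ≤ (6 * n * k + 3) ^ n := by exact_mod_cast hG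
            calc (G.card : ℝ) ^ k ≤ ((6 * n * k + 3) ^ n) ^ k := by gcongr
              _ = (6 * n * k + 3) ^ (n * k) := by rw [pow_mul]
              _ ≤ (Real.exp (6 * n * k + 3)) ^ (n * k) := by
                gcongr
                linarith [Real.add_one_le_exp ((6 * n * k + 3 : ℝ))]
              _ = Real.exp A := by
                rw [← Real.exp_nat_mul]; congr 1; rw [hA]; push_cast; ring
              _ ≤ Real.exp (2 * A) := Real.exp_le_exp.2 (by linarith)
    have h2 : Real.exp (-(2 * A)) * ∑ w ∈ Fintype.piFinset (fun _ : Fin k => G), ∑ ε ∈ SS k n,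
        (Real.exp (2 * FF ε w) + Real.exp ((-2) * FF ε w)) ≤
        (SS k n).card * (2 * Real.exp 6) := by
      refine (mul_le_mul_of_nonneg_left h1 (Real.exp_pos _).le).trans ?_
      rw [← mul_assoc, ← Real.exp_add]; simp
    simp only [Finset.sum_const, nsmul_eq_mul, mul_one]
    calc _ ≤ A ^ 2 * ((SS k n).card + (SS k n).card * (2 * Real.exp 6)) := by gcongr
      _ = _ := by ring

/-- time direction -/
def e0 (n : ℕ) : ℝ × EuclideanSpace ℝ (Fin n) := (1, 0)

/-- space directions -/
def ej {n : ℕ} (j : Fin n) : ℝ × EuclideanSpace ℝ (Fin n) := (0, EuclideanSpace.single j 1)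

/-- time coordinate -/
def c0 (n : ℕ) : Module.Dual ℝ (ℝ × EuclideanSpace ℝ (Fin n)) := LinearMap.fst ℝ _ _

/-- space coordinates -/
def cj {n : ℕ} (j : Fin n) : Module.Dual ℝ (ℝ × EuclideanSpace ℝ (Fin n)) where
  toFun v := v.2 j
  map_add' _ _ := rfl
  map_smul' _ _ := rfl

lemma vec_eq {n : ℕ} (v : ℝ × EuclideanSpace ℝ (Fin n)) :
    v = c0 n v • e0 n + ∑ j, cj j v • ej j := by
  refine Prod.ext ?_ ?_
  · simp [c0, e0, ej, cj, Prod.fst_sum]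
  · ext i
    simp [c0, e0, ej, cj, Prod.snd_sum, Finset.sum_apply, Pi.single_apply]
    rfl

lemma mem_lor {n : ℕ} (v : ℝ × EuclideanSpace ℝ (Fin n)) :
    v ∈ lorentzCone n ↔ 0 ≤ c0 n v ∧ ∑ j, cj j v ^ 2 ≤ c0 n v ^ 2 := by
  have h : ‖v.2‖ ^ 2 = ∑ j, cj j v ^ 2 := by
    rw [EuclideanSpace.real_norm_sq_eq]; rfl
  rw [← h]
  show ‖v.2‖ ≤ v.1 ↔ 0 ≤ v.1 ∧ ‖v.2‖ ^ 2 ≤ v.1 ^ 2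
  constructor
  · intro h
    exact ⟨(norm_nonneg _).trans h, by gcongr⟩
  · rintro ⟨h1, h2⟩
    exact le_of_sq_le_sq h2 h1

lemma dual_bound {n : ℕ} {φ : Module.Dual ℝ (ℝ × EuclideanSpace ℝ (Fin n))}
    (hφ : φ ∈ dualConeSet (lorentzCone n)) :
    0 ≤ φ (e0 n) ∧ ∑ j, φ (ej j) ^ 2 ≤ φ (e0 n) ^ 2 := by
  have h0 : 0 ≤ φ (e0 n) := hφ _ (by simp [lorentzCone, e0])
  refine ⟨h0, ?_⟩
  set r := Real.sqrt (∑ j, φ (ej j) ^ 2) with hr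
  have hS : 0 ≤ ∑ j, φ (ej j) ^ 2 := Finset.sum_nonneg fun _ _ => sq_nonneg _
  have hr2 : r ^ 2 = ∑ j, φ (ej j) ^ 2 := Real.sq_sqrt hS
  have hr0 : 0 ≤ r := Real.sqrt_nonneg _
  let v : ℝ × EuclideanSpace ℝ (Fin n) := (r, WithLp.toLp 2 fun j => -φ (ej j))
  have hv : v ∈ lorentzCone n := by
    rw [mem_lor]
    refine ⟨hr0, ?_⟩
    show ∑ j, (-φ (ej j)) ^ 2 ≤ r ^ 2
    rw [hr2]; simp
  have h1 := hφ v hv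
  rw [vec_eq v, map_add, map_smul, map_sum] at h1
  simp only [map_smul, smul_eq_mul] at h1
  have h2 : c0 n v = r := rfl
  have h3 : ∀ j, cj j v = -φ (ej j) := fun _ => rfl
  simp only [h2, h3] at h1
  have h4 : ∑ j, -φ (ej j) * φ (ej j) = - r ^ 2 := by
    rw [hr2, ← Finset.sum_neg_distrib]
    exact Finset.sum_congr rfl fun _ _ => by ring
  rw [h4] at h1
  rw [← hr2]
  rcases hr0.eq_or_lt with h | h
  · rw [← h]; nlinarith [sq_nonneg (φ (e0 n))]
  · have : r ≤ φ (e0 n) := by nlinarith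
    gcongr

lemma dualPairing_tprod {V : Type*} [AddCommGroup V] [Module ℝ V] {k : ℕ}
    (φ : Fin k → Module.Dual ℝ V) (x : Fin k → V) :
    dualPairing φ (PiTensorProduct.tprod ℝ x) = ∏ i, φ i (x i) := by
  simp [dualPairing]

/-- the state -/
def TT {n k : ℕ} (M : ℝ) (ε : (Fin k → Fin n) → ℝ) :
    ⨂[ℝ] _ : Fin k, (ℝ × EuclideanSpace ℝ (Fin n)) :=
  M • PiTensorProduct.tprod ℝ (fun _ => e0 n) +
    ∑ I, ε I • PiTensorProduct.tprod ℝ (fun i => ej (I i))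

/-- the witness -/
def WW {n k : ℕ} (Q : (ℝ × EuclideanSpace ℝ (Fin n)) →ₗ[ℝ] (ℝ × EuclideanSpace ℝ (Fin n)))
    (M : ℝ) (ε : (Fin k → Fin n) → ℝ) :
    (⨂[ℝ] _ : Fin k, (ℝ × EuclideanSpace ℝ (Fin n))) →ₗ[ℝ] ℝ :=
  M • dualPairing (fun _ => c0 n ∘ₗ Q) + ∑ I, ε I • dualPairing (fun i => cj (I i) ∘ₗ Q)

lemma WW_tprod {n k : ℕ} (Q : (ℝ × EuclideanSpace ℝ (Fin n)) →ₗ[ℝ] (ℝ × EuclideanSpace ℝ (Fin n)))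
    (M : ℝ) (ε : (Fin k → Fin n) → ℝ) (x : Fin k → ℝ × EuclideanSpace ℝ (Fin n)) :
    WW Q M ε (PiTensorProduct.tprod ℝ x) =
      M * ∏ i, c0 n (Q (x i)) + ∑ I, ε I * ∏ i, cj (I i) (Q (x i)) := by
  simp [WW, LinearMap.sum_apply, dualPairing_tprod]

lemma TT_mem {n k : ℕ} (M : ℝ) (ε : (Fin k → Fin n) → ℝ)
    (hM : ∀ u : Fin k → Fin n → ℝ, (∀ i, ∑ j, u i j ^ 2 ≤ 1) → |FF ε u| ≤ M) :
    TT M ε ∈ maxTensorPow (lorentzCone n) k := by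
  intro φ hφ
  have := FF_homog ε M hM (fun i j => φ i (ej j)) (fun i => φ i (e0 n))
    (fun i => (dual_bound (hφ i)).1) (fun i => (dual_bound (hφ i)).2)
  simp only [TT, map_add, map_smul, map_sum, dualPairing_tprod, smul_eq_mul]
  have h2 := (abs_le.1 this).1
  unfold FF at h2
  linarith

lemma WW_nonneg {n k : ℕ} (Q : (ℝ × EuclideanSpace ℝ (Fin n)) →ₗ[ℝ] (ℝ × EuclideanSpace ℝ (Fin n)))
    (hQ : ∀ x ∈ lorentzCone n, Q x ∈ lorentzCone n)
    (M : ℝ) (ε : (Fin k → Fin n) → ℝ)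
    (hM : ∀ u : Fin k → Fin n → ℝ, (∀ i, ∑ j, u i j ^ 2 ≤ 1) → |FF ε u| ≤ M)
    (z) (hz : z ∈ minTensorPow (lorentzCone n) k) : 0 ≤ WW Q M ε z := by
  have hc : Convex ℝ {z | 0 ≤ WW Q M ε z} := convex_halfSpace_ge (WW Q M ε).isLinear 0
  refine convexHull_min ?_ hc hz
  rintro _ ⟨x, hx, rfl⟩
  rw [Set.mem_ofPred_eq]
  have := FF_homog ε M hM (fun i j => cj j (Q (x i))) (fun i => c0 n (Q (x i)))
    (fun i => ((mem_lor _).1 (hQ _ (hx i))).1) (fun i => ((mem_lor _).1 (hQ _ (hx i))).2)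
  rw [WW_tprod]
  have h2 := (abs_le.1 this).1
  unfold FF at h2
  linarith

lemma FF_smul {k n : ℕ} (s : ℝ) (hs : |s| = 1) (ε : (Fin k → Fin n) → ℝ) (M : ℝ)
    (hM : ∀ u : Fin k → Fin n → ℝ, (∀ i, ∑ j, u i j ^ 2 ≤ 1) → |FF ε u| ≤ M) :
    ∀ u : Fin k → Fin n → ℝ, (∀ i, ∑ j, u i j ^ 2 ≤ 1) → |FF (fun I => s * ε I) u| ≤ M := by
  intro u hu
  have : FF (fun I => s * ε I) u = s * FF ε u := by
    unfold FF
    rw [Finset.mul_sum]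
    exact Finset.sum_congr rfl fun _ _ => by ring
  rw [this, abs_mul, hs, one_mul]
  exact hM u hu

lemma core_eps {n k : ℕ} (hk : 1 ≤ k)
    (P Q : (ℝ × EuclideanSpace ℝ (Fin n)) →ₗ[ℝ] (ℝ × EuclideanSpace ℝ (Fin n)))
    (hP : ∀ k : ℕ, 1 ≤ k →
        Set.MapsTo (⇑(PiTensorProduct.map fun _ : Fin k => P))
          (maxTensorPow (lorentzCone n) k) (minTensorPow (lorentzCone n) k))
    (hQ : ∀ x ∈ lorentzCone n, Q x ∈ lorentzCone n)
    (M : ℝ) (ε : (Fin k → Fin n) → ℝ) (s : ℝ) (hs : |s| = 1)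
    (hM : ∀ u : Fin k → Fin n → ℝ, (∀ i, ∑ j, u i j ^ 2 ≤ 1) → |FF ε u| ≤ M) :
    0 ≤ M ^ 2 * (c0 n (Q (P (e0 n)))) ^ k +
      s * ∑ I : Fin k → Fin n, ∑ J : Fin k → Fin n, 
        (ε J * ε I) * ∏ i, cj (J i) (Q (P (ej (I i)))) := by
  have key : ∀ σ : ℝ, |σ| = 1 → 0 ≤ M ^ 2 * (c0 n (Q (P (e0 n)))) ^ k +
      (σ * M * ∑ J : Fin k → Fin n, s * ε J * ∏ i, cj (J i) (Q (P (e0 n))) +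
      σ * M * ∑ I : Fin k → Fin n, ε I * ∏ i, c0 n (Q (P (ej (I i))))) +
      σ ^ 2 * (s * ∑ I : Fin k → Fin n, ∑ J : Fin k → Fin n, 
        (ε J * ε I) * ∏ i, cj (J i) (Q (P (ej (I i))))) := by
    intro σ hσ
    have h1 := WW_nonneg Q hQ M (fun I => σ * (s * ε I))
      (FF_smul σ hσ _ M (FF_smul s hs ε M hM)) _
      (hP k hk (TT_mem M (fun I => σ * ε I) (FF_smul σ hσ ε M hM)))
    refine h1.trans (le_of_eq ?_)
    simp only [TT, map_add, map_smul, map_sum, PiTensorProduct.map_tprod, WW_tprod, smul_eq_mul]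
    simp only [Finset.prod_const, Finset.card_univ, Fintype.card_fin, mul_add, Finset.mul_sum,
      Finset.sum_add_distrib]
    have e1 : M * (M * (c0 n (Q (P (e0 n)))) ^ k) = M ^ 2 * (c0 n (Q (P (e0 n)))) ^ k := by ring
    rw [e1]
    have e2 : ∀ I : Fin k → Fin n, σ * ε I * (M * ∏ i, c0 n (Q (P (ej (I i))))) =
      σ * M * (ε I * ∏ i, c0 n (Q (P (ej (I i))))) := fun I => by ring
    have e3 : ∀ I : Fin k → Fin n, M * (σ * (s * ε I) * ∏ i, cj (I i) (Q (P (e0 n)))) =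
      σ * M * (s * ε I * ∏ i, cj (I i) (Q (P (e0 n)))) := fun I => by ring
    have e4 : ∀ I J : Fin k → Fin n, σ * ε I * (σ * (s * ε J) * ∏ i, cj (J i) (Q (P (ej (I i))))) =
      σ ^ 2 * (s * (ε J * ε I * ∏ i, cj (J i) (Q (P (ej (I i)))))) := fun I J => by ring
    simp only [e2, e3, e4]
    ring_nf
  have a1 := key 1 (by norm_num)
  have a2 := key (-1) (by norm_num)
  linarith

lemma core_k {n k : ℕ} (hn : 1 ≤ n) (hk : 1 ≤ k)
    (P Q : (ℝ × EuclideanSpace ℝ (Fin n)) →ₗ[ℝ] (ℝ × EuclideanSpace ℝ (Fin n)))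
    (hP : ∀ k : ℕ, 1 ≤ k →
        Set.MapsTo (⇑(PiTensorProduct.map fun _ : Fin k => P))
          (maxTensorPow (lorentzCone n) k) (minTensorPow (lorentzCone n) k))
    (hQ : ∀ x ∈ lorentzCone n, Q x ∈ lorentzCone n)
    (hpos : 0 ≤ c0 n (Q (P (e0 n)))) :
    (-∑ j, cj j (Q (P (ej j)))) ^ k ≤
      ((1 + 2 * Real.exp 6) * ((6 * n * k + 3) * n * k) ^ 2) * (c0 n (Q (P (e0 n)))) ^ k := by
  obtain ⟨M, hM0, hM, hMs⟩ := exists_M n k hn hk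
  set s : ℝ := -(-1) ^ k with hsdef
  have hs : |s| = 1 := by rw [hsdef, abs_neg, abs_pow]; simp
  have h1 : 0 ≤ ∑ ε ∈ SS k n, (M ε ^ 2 * (c0 n (Q (P (e0 n)))) ^ k +
      s * ∑ I : Fin k → Fin n, ∑ J : Fin k → Fin n, 
        (ε J * ε I) * ∏ i, cj (J i) (Q (P (ej (I i))))) :=
    Finset.sum_nonneg fun ε _ => core_eps hk P Q hP hQ (M ε) ε s hs (hM ε)
  rw [Finset.sum_add_distrib, ← Finset.sum_mul, ← Finset.mul_sum, Finset.sum_comm] at h1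
  have h2 : ∀ I : Fin k → Fin n, ∑ ε ∈ SS k n, ∑ J : Fin k → Fin n, 
        (ε J * ε I) * ∏ i, cj (J i) (Q (P (ej (I i)))) =
        (SS k n).card * ∏ i, cj (I i) (Q (P (ej (I i)))) := by
    intro I
    rw [Finset.sum_comm]
    simp only [← Finset.sum_mul, SS_orth]
    simp
  simp only [h2] at h1
  rw [← Finset.mul_sum] at h1
  have h3 : ∑ I : Fin k → Fin n, ∏ i, cj (I i) (Q (P (ej (I i)))) =
      (∑ j, cj j (Q (P (ej j)))) ^ k := by
    have := Finset.prod_univ_sum (fun _ : Fin k => (Finset.univ : Finset (Fin n)))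
      (fun _ j => cj j (Q (P (ej j))))
    rw [Fintype.piFinset_univ] at this
    rw [← this]; simp
  rw [h3] at h1
  have hcard : (0 : ℝ) < (SS k n).card := by
    rw [SS_card]; positivity
  have h4 := mul_le_mul_of_nonneg_right hMs (pow_nonneg hpos k)
  have h5 : (-∑ j, cj j (Q (P (ej j)))) ^ k = (-1) ^ k * (∑ j, cj j (Q (P (ej j)))) ^ k := by
    rw [neg_pow]
  rw [h5]
  refine le_of_mul_le_mul_left ?_ hcard
  rw [hsdef] at h1
  linarith

lemma core {n : ℕ} (hn : 1 ≤ n)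
    (P Q : (ℝ × EuclideanSpace ℝ (Fin n)) →ₗ[ℝ] (ℝ × EuclideanSpace ℝ (Fin n)))
    (hP : ∀ k : ℕ, 1 ≤ k →
        Set.MapsTo (⇑(PiTensorProduct.map fun _ : Fin k => P))
          (maxTensorPow (lorentzCone n) k) (minTensorPow (lorentzCone n) k))
    (hQ : ∀ x ∈ lorentzCone n, Q x ∈ lorentzCone n)
    (hpos : 0 ≤ c0 n (Q (P (e0 n)))) :
    0 ≤ c0 n (Q (P (e0 n))) + ∑ j, cj j (Q (P (ej j))) := by
  by_contra! hneg
  set y := c0 n (Q (P (e0 n)))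
  set τ := -∑ j, cj j (Q (P (ej j))) with hτ
  have hyτ : y < τ := by linarith
  have hτ0 : 0 < τ := by linarith
  set r := y / τ
  have hr : |r| < 1 := by
    rw [abs_of_nonneg (div_nonneg hpos hτ0.le), div_lt_one hτ0]; exact hyτ
  have hr0 : 0 ≤ r := div_nonneg hpos hτ0.le
  have hk : ∀ k : ℕ, 1 ≤ k → 1 ≤ ((1 + 2 * Real.exp 6) * (9 * n * n) ^ 2) * ((k : ℝ) ^ 4 * r ^ k) := by
    intro k hk
    have h := core_k hn hk P Q hP hQ hpos
    have hn' : (1 : ℝ) ≤ n := by exact_mod_cast hn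
    have hk' : (1 : ℝ) ≤ k := by exact_mod_cast hk
    have hnk : (1 : ℝ) ≤ n * k := by nlinarith
    have h1 : τ ^ k ≤ ((1 + 2 * Real.exp 6) * ((9 * n * k) * n * k) ^ 2) * y ^ k := by
      refine h.trans ?_
      gcongr
      linarith
    have h2 : y = r * τ := by simp only [r]; field_simp
    rw [h2, mul_pow] at h1
    have h3 : 0 < τ ^ k := by positivity
    refine le_of_mul_le_mul_right ?_ h3
    rw [one_mul]
    refine h1.trans (le_of_eq ?_)
    ring
  have ht := (tendsto_pow_const_mul_const_pow_of_abs_lt_one 4 hr).const_mul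
    ((1 + 2 * Real.exp 6) * (9 * n * n) ^ 2 : ℝ)
  rw [mul_zero] at ht
  have := ge_of_tendsto ht (Filter.eventually_atTop.2 ⟨1, hk⟩)
  linarith

lemma compact_hull {E : Type*} [NormedAddCommGroup E] [NormedSpace ℝ E] [FiniteDimensional ℝ E]
    {s : Set E} (hs : IsCompact s) : IsCompact (convexHull ℝ s) := by
  classical
  rcases s.eq_empty_or_nonempty with h | ⟨s0, hs0⟩
  · simp [h]
  set N := Module.finrank ℝ E + 1
  have hc : IsCompact ((stdSimplex ℝ (Fin N)) ×ˢ (Set.pi Set.univ fun _ : Fin N => s)) :=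
    (isCompact_stdSimplex ℝ (Fin N)).prod (isCompact_univ_pi fun _ => hs)
  have hf : Continuous fun p : (Fin N → ℝ) × (Fin N → E) => ∑ i, p.1 i • p.2 i := by fun_prop
  convert hc.image hf
  apply Set.Subset.antisymm
  · intro x hx
    obtain ⟨ι, _, z, w, hz, hind, hw, hw1, hx⟩ := eq_pos_convex_span_of_mem_convexHull hx
    have hcard : Fintype.card ι ≤ Fintype.card (Fin N) := by
      rw [Fintype.card_fin]
      refine (AffineIndependent.card_le_finrank_succ hind).trans ?_
      exact Nat.succ_le_succ (Submodule.finrank_le _)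
    obtain ⟨e⟩ := Function.Embedding.nonempty_of_card_le hcard
    have hi := e.injective
    have a1 : ∀ i, Function.extend e w 0 (e i) = w i := fun i => hi.extend_apply _ _ _
    have a2 : ∀ i, Function.extend e z (fun _ => s0) (e i) = z i := fun i => hi.extend_apply _ _ _
    have a3 : ∀ j, j ∉ Set.range e → Function.extend e w 0 j = 0 := by
      intro j hj
      rw [Function.extend_apply' _ _ _ hj]; rfl
    refine ⟨(Function.extend e w 0, Function.extend e z fun _ => s0), ⟨⟨?_, ?_⟩, ?_⟩, ?_⟩
    · intro j
      by_cases hj : j ∈ Set.range e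
      · obtain ⟨i, rfl⟩ := hj
        show 0 ≤ Function.extend e w 0 (e i)
        rw [a1]; exact (hw i).le
      · exact (a3 j hj).ge
    · rw [← hw1]
      exact (Fintype.sum_of_injective e hi _ _ a3 (fun i => (a1 i).symm)).symm
    · intro j _
      by_cases hj : j ∈ Set.range e
      · obtain ⟨i, rfl⟩ := hj
        show Function.extend e z (fun _ => s0) (e i) ∈ s
        rw [a2]; exact hz ⟨i, rfl⟩
      · show Function.extend e z (fun _ => s0) j ∈ s
        rw [Function.extend_apply' _ _ _ hj]; exact hs0
    · rw [← hx]
      refine (Fintype.sum_of_injective e hi _ _ ?_ ?_).symm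
      · intro j hj
        simp only
        rw [a3 j hj, zero_smul]
      · intro i
        simp only
        rw [a1, a2]
  · rintro _ ⟨⟨w, z⟩, ⟨⟨hw0, hw1⟩, hz⟩, rfl⟩
    exact (convex_convexHull ℝ s).sum_mem (fun i _ => hw0 i) hw1
      (fun i _ => subset_convexHull ℝ s (hz i (Set.mem_univ _)))

/-- columns of an extremal entanglement breaking map -/
def gg {n : ℕ} (p : EuclideanSpace ℝ (Fin n) × EuclideanSpace ℝ (Fin n)) :
    (ℝ × EuclideanSpace ℝ (Fin n)) × (Fin n → ℝ × EuclideanSpace ℝ (Fin n)) :=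
  ((1, p.2), fun j => p.1 j • (1, p.2))

/-- the normalized dual functional -/
def phi {n : ℕ} (c : EuclideanSpace ℝ (Fin n)) : Module.Dual ℝ (ℝ × EuclideanSpace ℝ (Fin n)) :=
  c0 n + ∑ j, c j • cj j

lemma phi_apply {n : ℕ} (c : EuclideanSpace ℝ (Fin n)) (v : ℝ × EuclideanSpace ℝ (Fin n)) :
    phi c v = v.1 + inner ℝ c v.2 := by
  simp [phi, c0, LinearMap.sum_apply, PiLp.inner_apply]
  exact Finset.sum_congr rfl fun j _ => mul_comm _ _

lemma phi_mem {n : ℕ} {c : EuclideanSpace ℝ (Fin n)} (hc : ‖c‖ ≤ 1) :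
    phi c ∈ dualConeSet (lorentzCone n) := by
  intro v hv
  have hv : ‖v.2‖ ≤ v.1 := hv
  rw [phi_apply]
  have h1 := (abs_le.1 (abs_real_inner_le_norm c v.2)).1
  nlinarith [norm_nonneg v.2]

lemma lor_of_phi {n : ℕ} (q : ℝ × EuclideanSpace ℝ (Fin n))
    (h : ∀ c : EuclideanSpace ℝ (Fin n), ‖c‖ ≤ 1 → 0 ≤ phi c q) : q ∈ lorentzCone n := by
  have h1 := h (-(‖q.2‖⁻¹ • q.2)) (by
    rw [norm_neg, norm_smul, norm_inv, norm_norm]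
    exact inv_mul_le_one)
  rw [phi_apply, inner_neg_left, real_inner_smul_left, real_inner_self_eq_norm_sq] at h1
  show ‖q.2‖ ≤ q.1
  by_cases hq : ‖q.2‖ = 0
  · rw [hq] at h1 ⊢; simpa using h1
  · have : ‖q.2‖⁻¹ * ‖q.2‖ ^ 2 = ‖q.2‖ := by field_simp
    rw [this] at h1
    linarith

lemma lor_smul {n : ℕ} {t : ℝ} (ht : 0 ≤ t) {q : ℝ × EuclideanSpace ℝ (Fin n)}
    (h : q ∈ lorentzCone n) : t • q ∈ lorentzCone n := by
  have h : ‖q.2‖ ≤ q.1 := h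
  show ‖t • q.2‖ ≤ t * q.1
  rw [norm_smul, Real.norm_of_nonneg ht]
  gcongr

theorem main_pos {n : ℕ}
    (P : (ℝ × EuclideanSpace ℝ (Fin n)) →ₗ[ℝ] (ℝ × EuclideanSpace ℝ (Fin n)))
    (htr : ∀ Q : (ℝ × EuclideanSpace ℝ (Fin n)) →ₗ[ℝ] (ℝ × EuclideanSpace ℝ (Fin n)),
      (∀ x ∈ lorentzCone n, Q x ∈ lorentzCone n) →
      0 ≤ c0 n (Q (P (e0 n))) + ∑ j, cj j (Q (P (ej j))))
    (hp : 0 < c0 n (P (e0 n))) : IsEntanglementBreaking (lorentzCone n) (lorentzCone n) P := by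
  classical
  set p := c0 n (P (e0 n)) with hpdef
  let D : Set (EuclideanSpace ℝ (Fin n)) := Metric.closedBall 0 1
  have hD : IsCompact D := isCompact_closedBall _ _
  have hg : Continuous (gg (n := n)) := by unfold gg; fun_prop
  have hK : IsCompact (convexHull ℝ (gg '' (D ×ˢ D))) := compact_hull ((hD.prod hD).image hg)
  let H : (ℝ × EuclideanSpace ℝ (Fin n)) × (Fin n → ℝ × EuclideanSpace ℝ (Fin n)) :=
    (P (e0 n), fun j => P (ej j))
  by_cases hmem : p⁻¹ • H ∈ convexHull ℝ (gg '' (D ×ˢ D))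
  · rw [mem_convexHull_iff_exists_fintype] at hmem
    obtain ⟨ι, _, w, z, hw, hw1, hz, hsum⟩ := hmem
    choose cd hcd hcdz using hz
    have hH : H = ∑ i, (p * w i) • gg (cd i) := by
      have : H = p • (p⁻¹ • H) := by rw [smul_smul, mul_inv_cancel₀ hp.ne', one_smul]
      rw [this, ← hsum, Finset.smul_sum]
      exact Finset.sum_congr rfl fun i _ => by rw [smul_smul, hcdz]
    have h0 : P (e0 n) = ∑ i, (p * w i) • ((1, (cd i).2) : ℝ × EuclideanSpace ℝ (Fin n)) := by
      have := congrArg Prod.fst hH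
      rw [Prod.fst_sum] at this
      exact this
    have hj : ∀ j, P (ej j) =
        ∑ i, (p * w i) • (cd i).1 j • ((1, (cd i).2) : ℝ × EuclideanSpace ℝ (Fin n)) := by
      intro j
      have := congrFun (congrArg Prod.snd hH) j
      rw [Prod.snd_sum, Finset.sum_apply] at this
      exact this
    let e := (Fintype.equivFin ι).symm
    refine ⟨Fintype.card ι, fun i => (p * w (e i)) • phi (cd (e i)).1,
      fun i => (1, (cd (e i)).2), ?_, ?_, ?_⟩
    · intro i v hv
      have h1 : ‖(cd (e i)).1‖ ≤ 1 := by simpa [D] using (hcd (e i)).1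
      have := phi_mem h1 v hv
      have hwi := hw (e i)
      rw [LinearMap.smul_apply, smul_eq_mul]
      positivity
    · intro i
      show ‖(cd (e i)).2‖ ≤ 1
      simpa [D] using (hcd (e i)).2
    · intro v
      rw [Equiv.sum_comp e (fun i => ((p * w i) • phi (cd i).1) v •
        ((1, (cd i).2) : ℝ × EuclideanSpace ℝ (Fin n)))]
      conv_lhs => rw [vec_eq v]
      rw [map_add, map_smul, map_sum]
      simp only [map_smul, h0, hj, Finset.smul_sum]
      rw [Finset.sum_comm, ← Finset.sum_add_distrib]
      refine Finset.sum_congr rfl fun i _ => ?_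
      simp only [smul_smul]
      rw [← Finset.sum_smul, ← add_smul]
      congr 1
      simp only [phi, LinearMap.smul_apply, LinearMap.add_apply, LinearMap.sum_apply, smul_eq_mul,
        mul_add, Finset.mul_sum]
      congr 1
      · ring
      · exact Finset.sum_congr rfl fun j _ => by ring
  · exfalso
    obtain ⟨f, u, hfu, hfK⟩ := geometric_hahn_banach_point_closed (convex_convexHull ℝ _)
      hK.isClosed hmem
    let f' : ((ℝ × EuclideanSpace ℝ (Fin n)) × (Fin n → ℝ × EuclideanSpace ℝ (Fin n))) →ₗ[ℝ] ℝ :=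
      f.toLinearMap - u • (c0 n ∘ₗ LinearMap.fst ℝ _ _)
    have hf' : ∀ X, f' X = f X - u * X.1.1 := fun X => rfl
    let Q : (ℝ × EuclideanSpace ℝ (Fin n)) →ₗ[ℝ] (ℝ × EuclideanSpace ℝ (Fin n)) :=
      (f' ∘ₗ LinearMap.inl ℝ _ _).smulRight (e0 n) +
        ∑ j, (f' ∘ₗ LinearMap.inr ℝ _ _ ∘ₗ LinearMap.single ℝ _ j).smulRight (ej j)
    have hQ : ∀ x, Q x = f' (x, 0) • e0 n + ∑ j, f' (0, Pi.single j x) • ej j := by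
      intro x
      simp [Q, LinearMap.sum_apply]
    have hQ0 : ∀ x, c0 n (Q x) = f' (x, 0) := by
      intro x; rw [hQ]
      simp [c0, e0, ej, Prod.fst_sum]
    have hQj : ∀ x j, cj j (Q x) = f' (0, Pi.single j x) := by
      intro x j; rw [hQ]
      have : ∀ i, cj j (ej i) = if j = i then (1 : ℝ) else 0 := by
        intro i
        show (EuclideanSpace.single i (1 : ℝ) : EuclideanSpace ℝ (Fin n)) j = _
        simp [Pi.single_apply]
      have h2 : cj j (e0 n) = 0 := rfl
      simp [this, h2]
    have hsplit : ∀ X : (ℝ × EuclideanSpace ℝ (Fin n)) × (Fin n → ℝ × EuclideanSpace ℝ (Fin n)),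
        f' X = f' (X.1, 0) + ∑ j, f' (0, Pi.single j (X.2 j)) := by
      intro X
      rw [← map_sum, ← map_add]
      congr 1
      refine Prod.ext ?_ ?_
      · simp [Prod.fst_sum]
      · simp [Prod.snd_sum, Finset.univ_sum_single]
    have hphi : ∀ c d : EuclideanSpace ℝ (Fin n), phi c (Q (1, d)) = f' (gg (c, d)) := by
      intro c d
      rw [hsplit]
      simp only [phi, LinearMap.add_apply, LinearMap.sum_apply, LinearMap.smul_apply, hQ0, hQj,
        smul_eq_mul]
      congr 1
      refine Finset.sum_congr rfl fun j _ => ?_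
      have : ((0, Pi.single j ((gg (c, d)).2 j)) :
          (ℝ × EuclideanSpace ℝ (Fin n)) × (Fin n → ℝ × EuclideanSpace ℝ (Fin n))) =
          c j • (0, Pi.single j (1, d)) := by
        rw [Prod.smul_mk, smul_zero, ← Pi.single_smul]; rfl
      rw [this, map_smul, smul_eq_mul]
    have hpos1 : ∀ d : EuclideanSpace ℝ (Fin n), ‖d‖ ≤ 1 → Q (1, d) ∈ lorentzCone n := by
      intro d hd
      refine lor_of_phi _ fun c hc => ?_
      rw [hphi, hf']
      have := hfK (gg (c, d)) (subset_convexHull ℝ _ ⟨(c, d), ⟨by simpa [D] using hc,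
        by simpa [D] using hd⟩, rfl⟩)
      have h1 : (gg (c, d)).1.1 = 1 := rfl
      rw [h1]; linarith
    have hQpos : ∀ x ∈ lorentzCone n, Q x ∈ lorentzCone n := by
      rintro ⟨t, v⟩ hx
      have hx : ‖v‖ ≤ t := hx
      rcases ((norm_nonneg v).trans hx).eq_or_lt with h | h
      · have hv : v = 0 := norm_eq_zero.1 (le_antisymm (by linarith) (norm_nonneg _))
        rw [← h, hv]
        have : ((0, 0) : ℝ × EuclideanSpace ℝ (Fin n)) = 0 := rfl
        rw [this, map_zero]
        simp [lorentzCone]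
      · have e : ((t, v) : ℝ × EuclideanSpace ℝ (Fin n)) = t • (1, t⁻¹ • v) := by
          rw [Prod.smul_mk, smul_smul, mul_inv_cancel₀ h.ne', one_smul, smul_eq_mul, mul_one]
        rw [e, map_smul]
        refine lor_smul h.le (hpos1 _ ?_)
        rw [norm_smul, norm_inv, Real.norm_of_nonneg h.le, inv_mul_le_one₀ h]
        exact hx
    have h1 := htr Q hQpos
    simp only [hQ0, hQj] at h1
    have h2 := hsplit H
    have h3 : f' (p⁻¹ • H) < 0 := by
      rw [hf']
      have : (p⁻¹ • H).1.1 = 1 := by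
        show p⁻¹ * p = 1
        exact inv_mul_cancel₀ hp.ne'
      rw [this]; linarith
    rw [map_smul, smul_eq_mul, h2] at h3
    have := mul_nonneg (inv_nonneg.2 hp.le) h1
    exact absurd h3 (not_lt.2 this)

theorem main_zero {n : ℕ}
    (P : (ℝ × EuclideanSpace ℝ (Fin n)) →ₗ[ℝ] (ℝ × EuclideanSpace ℝ (Fin n)))
    (htr : ∀ Q : (ℝ × EuclideanSpace ℝ (Fin n)) →ₗ[ℝ] (ℝ × EuclideanSpace ℝ (Fin n)),
      (∀ x ∈ lorentzCone n, Q x ∈ lorentzCone n) →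
      0 ≤ c0 n (Q (P (e0 n))) + ∑ j, cj j (Q (P (ej j))))
    (hp : c0 n (P (e0 n)) = 0) : IsEntanglementBreaking (lorentzCone n) (lorentzCone n) P := by
  have hpos : ∀ x ∈ lorentzCone n, P x ∈ lorentzCone n := by
    intro x hx
    refine lor_of_phi _ fun c hc => ?_
    have h := htr ((phi c).smulRight x) (fun v hv => lor_smul (phi_mem hc v hv) hx)
    refine h.trans (le_of_eq ?_)
    conv_rhs => rw [vec_eq x]
    simp only [LinearMap.smulRight_apply, map_add, map_smul, map_sum, smul_eq_mul]
    congr 1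
    · ring
    · exact Finset.sum_congr rfl fun j _ => by ring
  have hz : ∀ x ∈ lorentzCone n, c0 n (P x) = 0 → P x = 0 := by
    intro x hx h
    have h1 : ‖(P x).2‖ ≤ (P x).1 := hpos x hx
    have h2 : (P x).1 = 0 := h
    rw [h2] at h1
    exact Prod.ext h2 (norm_le_zero_iff.1 h1)
  have he0 : e0 n ∈ lorentzCone n := by simp [lorentzCone, e0]
  have hP0 : P (e0 n) = 0 := hz _ he0 hp
  have hPj : ∀ j, P (ej j) = 0 := by
    intro j
    have m1 : e0 n + ej j ∈ lorentzCone n := by simp [lorentzCone, e0, ej]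
    have m2 : e0 n - ej j ∈ lorentzCone n := by simp [lorentzCone, e0, ej]
    have b1 := ((mem_lor _).1 (hpos _ m1)).1
    have b2 := ((mem_lor _).1 (hpos _ m2)).1
    have b3 := hz _ m1
    simp only [map_add, map_sub, hP0, map_zero] at b1 b2 b3
    have : c0 n (P (ej j)) = 0 := by linarith
    simpa using b3 (by linarith)
  refine ⟨0, fun _ => 0, fun _ => 0, fun i => i.elim0, fun i => i.elim0, fun v => ?_⟩
  rw [vec_eq v]
  simp [hP0, hPj]

/-- **Theorem.** For every `n ≥ 1`, the Lorentz cone `L_n` is resilient: every linear map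
`P : ℝ^{n+1} → ℝ^{n+1}` with `P^{⊗k}(L_n^{⊗max k}) ⊆ L_n^{⊗min k}` for all `k ≥ 1` is
`(L_n, L_n)`-entanglement breaking. -/
theorem lorentzCone_resilient (n : ℕ) (hn : 1 ≤ n) :
    ∀ P : (ℝ × EuclideanSpace ℝ (Fin n)) →ₗ[ℝ] (ℝ × EuclideanSpace ℝ (Fin n)),
      (∀ k : ℕ, 1 ≤ k →
        Set.MapsTo (⇑(PiTensorProduct.map fun _ : Fin k => P))
          (maxTensorPow (lorentzCone n) k) (minTensorPow (lorentzCone n) k)) →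
      IsEntanglementBreaking (lorentzCone n) (lorentzCone n) P := by
  intro P hP
  have hpos : ∀ Q : (ℝ × EuclideanSpace ℝ (Fin n)) →ₗ[ℝ] (ℝ × EuclideanSpace ℝ (Fin n)),
      (∀ x ∈ lorentzCone n, Q x ∈ lorentzCone n) → 0 ≤ c0 n (Q (P (e0 n))) := by
    intro Q hQ
    have := core_eps (k := 1) le_rfl P Q hP hQ 1 (fun _ => 0) 1 (by simp)
      (fun u _ => by simp [FF])
    simpa using this
  have htr : ∀ Q : (ℝ × EuclideanSpace ℝ (Fin n)) →ₗ[ℝ] (ℝ × EuclideanSpace ℝ (Fin n)),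
      (∀ x ∈ lorentzCone n, Q x ∈ lorentzCone n) →
      0 ≤ c0 n (Q (P (e0 n))) + ∑ j, cj j (Q (P (ej j))) :=
    fun Q hQ => core hn P Q hP hQ (hpos Q hQ)
  rcases (hpos LinearMap.id (fun x hx => hx)).eq_or_lt with h | h
  · exact main_zero P htr h.symm
  · exact main_pos P htr h

end
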